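/- (Proposition 3) Let A ∈ ℝ^{n×n×r}, B ∈ ℝ^{n×m×r}, and let Q = Qᵀ ∈ ℝ^{n×n×r} with ψ(Q) positive semidefinite and R = Rᵀ ∈ ℝ^{m×m×r} with ψ(R) positive definite. Assume the pair (A,B) is stabilizable (there exists a matrix K with spectral radius of ψ(A) − ψ(B)K strictly less than 1) and the pair (Q,A) is detectable (the pair (ψ(A)ᵀ, ψ(Q)ᵀ) is stabilizable). Then there exists a unique tensor P ∈ ℝ^{n×n×r} with ψ(P) symmetric positive semidefinite that solves the T-algebraic Riccati equation P = Aᵀ⋆P⋆A − Aᵀ⋆P⋆B⋆(R + Bᵀ⋆P⋆B)^{−1}⋆Bᵀ⋆P⋆A + Q, and the gain tensor K = (R + Bᵀ⋆P⋆B)^{−1}⋆Bᵀ⋆P⋆A is an optimal feedback gain: the closed loop ψ(A) − ψ(B)ψ(K) has spectral radius strictly less than 1, and for every initial state x₀ ∈ ℝ^{nr} and every gain tensor K' ∈ ℝ^{m×n×r} with spectral radius of ψ(A) − ψ(B)ψ(K') strictly less than 1, the quadratic cost satisfies J(x₀, K) ≤ J(x₀, K'). -/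

import Mathlib

/-!
STATEMENT 17 (Proposition 3): Under stabilizability of `(A,B)` and detectability of
`(Q,A)`, with `Q = Qᵀ`, `ψ(Q) ⪰ 0`, `R = Rᵀ`, `ψ(R) ≻ 0`, there exists a unique tensor
`P` with `ψ(P)` symmetric positive semidefinite solving the T-algebraic Riccati
equation, and the gain tensor `K = (R + Bᵀ⋆P⋆B)⁻¹⋆Bᵀ⋆P⋆A` is an optimal feedback gain.
-/

open Matrix

def psiBC {r : ℕ} {ι κ : Type*} (T : Fin r → Matrix ι κ ℝ) :
    Matrix (Fin r × ι) (Fin r × κ) ℝ :=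
  fun p q => T (p.1 - q.1) p.2 q.2

def tProd {r : ℕ} {ι κ χ : Type*} [Fintype κ]
    (T : Fin r → Matrix ι κ ℝ) (S : Fin r → Matrix κ χ ℝ) :
    Fin r → Matrix ι χ ℝ :=
  fun k => ∑ j : Fin r, T (k - j) * S j

/-- The T-transpose: `(Tᵀ)_k = (T_{-k})ᵀ`, so that `ψ(Tᵀ) = ψ(T)ᵀ`. -/
def tTr {r : ℕ} {ι κ : Type*} (T : Fin r → Matrix ι κ ℝ) :
    Fin r → Matrix κ ι ℝ :=
  fun k => (T (-k))ᵀ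

/-- Schur stability of a real matrix: spectral radius strictly less than 1. -/
def StableR {N : Type*} [Fintype N] [DecidableEq N] (M : Matrix N N ℝ) : Prop :=
  ∀ μ ∈ spectrum ℂ (M.map Complex.ofReal), ‖μ‖ < 1

/-- The infinite-horizon quadratic cost `J(x₀, K)` of the closed loop
`x(t+1) = (A − B K) x(t)`, `u(t) = −K x(t)`. -/
noncomputable def lqCost {N M : Type*} [Fintype N] [Fintype M] [DecidableEq N]
    (Am : Matrix N N ℝ) (Bm : Matrix N M ℝ) (Qm : Matrix N N ℝ) (Rm : Matrix M M ℝ)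
    (Km : Matrix M N ℝ) (x0 : N → ℝ) : ℝ :=
  ∑' t : ℕ,
    ((((Am - Bm * Km) ^ t) *ᵥ x0) ⬝ᵥ (Qm *ᵥ (((Am - Bm * Km) ^ t) *ᵥ x0)) +
      (-(Km *ᵥ (((Am - Bm * Km) ^ t) *ᵥ x0))) ⬝ᵥ
        (Rm *ᵥ (-(Km *ᵥ (((Am - Bm * Km) ^ t) *ᵥ x0)))))

/-- `P` solves the T-algebraic Riccati equation
`P = Aᵀ⋆P⋆A − Aᵀ⋆P⋆B⋆(R + Bᵀ⋆P⋆B)⁻¹⋆Bᵀ⋆P⋆A + Q`, where the T-inverse is the tensor `W`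
with `ψ(W) = (ψ(R) + ψ(B)ᵀψ(P)ψ(B))⁻¹`. -/
def SolvesTARE {n m r : ℕ} (A : Fin r → Matrix (Fin n) (Fin n) ℝ)
    (B : Fin r → Matrix (Fin n) (Fin m) ℝ) (Q : Fin r → Matrix (Fin n) (Fin n) ℝ)
    (R : Fin r → Matrix (Fin m) (Fin m) ℝ) (P : Fin r → Matrix (Fin n) (Fin n) ℝ) : Prop :=
  ∃ W : Fin r → Matrix (Fin m) (Fin m) ℝ,
    psiBC W = (psiBC R + (psiBC B)ᵀ * psiBC P * psiBC B)⁻¹ ∧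
    P = tProd (tTr A) (tProd P A)
        - tProd (tTr A) (tProd P (tProd B (tProd W (tProd (tTr B) (tProd P A))))) + Q

/-- `K = (R + Bᵀ⋆P⋆B)⁻¹⋆Bᵀ⋆P⋆A` in the T-product sense. -/
def IsTQRGain {n m r : ℕ}
    (B : Fin r → Matrix (Fin n) (Fin m) ℝ) (R : Fin r → Matrix (Fin m) (Fin m) ℝ)
    (A P : Fin r → Matrix (Fin n) (Fin n) ℝ) (K : Fin r → Matrix (Fin m) (Fin n) ℝ) : Prop :=
  ∃ W : Fin r → Matrix (Fin m) (Fin m) ℝ,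
    psiBC W = (psiBC R + (psiBC B)ᵀ * psiBC P * psiBC B)⁻¹ ∧
    K = tProd W (tProd (tTr B) (tProd P A))

/-!
The block circulant unfolding `ψ` turns T-products and T-transposes into matrix products and
transposes, so everything reduces to the matrix Riccati equation, studied in the Loewner order.

For a fixed gain `K`, let `Φ_K(P) = (A - BK)ᵀ P (A - BK) + Q + Kᵀ R K`. Completing the square shows
that the Riccati map is the pointwise minimum of the `Φ_K`, attained at `K = (R + BᵀPB)⁻¹BᵀPA`.
In particular it is monotone on the positive semidefinite cone. If `A - BK` is stable, then `Φ_K`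
has a unique fixed point, whose quadratic form is the cost of `K`, and every `P ≤ Φ_K(P)` lies
below it. Hence the Riccati iteration started at `0` increases and is bounded, and its limit is a
fixed point. By detectability every fixed point has a stabilizing gain, so comparison in the Loewner
order gives uniqueness and optimality.

The coefficients of the Riccati equation are invariant under cyclic shifts of the blocks; by
uniqueness so is its solution, which is therefore block circulant.
-/

open Filter Topology
open scoped MatrixOrder NNReal

section Stability

theorem isBigO_pow_of_spectralRadius_lt {𝔸 : Type*} [NormedRing 𝔸] [NormedAlgebra ℂ 𝔸]
    [CompleteSpace 𝔸] {a : 𝔸} {ρ : ℝ≥0} (h : spectralRadius ℂ a < ρ) :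
    (fun t : ℕ => a ^ t) =O[atTop] fun t => (ρ : ℝ) ^ t := by
  have gelfand := spectrum.pow_nnnorm_pow_one_div_tendsto_nhds_spectralRadius a
  refine Asymptotics.IsBigO.of_bound' ?_
  filter_upwards [gelfand.eventually_lt_const h, eventually_ne_atTop 0] with t ht ht0
  have hpow : (‖a ^ t‖₊ : ENNReal) ≤ (ρ : ENNReal) ^ t := by
    rw [← ENNReal.rpow_natCast, ← ENNReal.rpow_inv_le_iff (by positivity), ← one_div]
    exact ht.le
  rw [Real.norm_of_nonneg (by positivity)]
  exact_mod_cast hpow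

variable {N : Type*} [Fintype N] [DecidableEq N]

theorem mem_spectrum_iff_exists_mulVec_eq_smul {𝕜 : Type*} [Field 𝕜] {M : Matrix N N 𝕜} {μ : 𝕜} :
    μ ∈ spectrum 𝕜 M ↔ ∃ v ≠ 0, M *ᵥ v = μ • v := by
  rw [← Matrix.spectrum_toLin', ← Module.End.hasEigenvalue_iff_mem_spectrum]
  constructor
  · intro h
    obtain ⟨v, hv⟩ := h.exists_hasEigenvector
    exact ⟨v, hv.2, hv.apply_eq_smul⟩
  · rintro ⟨v, hv, hMv⟩
    exact Module.End.hasEigenvalue_of_hasEigenvector ⟨Module.End.mem_eigenspace_iff.mpr hMv, hv⟩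

theorem stableR_transpose {M : Matrix N N ℝ} : StableR Mᵀ ↔ StableR M := by
  simp only [StableR, Matrix.transpose_map, Matrix.mem_spectrum_iff_isRoot_charpoly,
    Matrix.charpoly_transpose]

open scoped Matrix.Norms.Frobenius

theorem StableR.spectralRadius_lt_one {M : Matrix N N ℝ} (hM : StableR M) :
    spectralRadius ℂ (M.map Complex.ofReal) < 1 := by
  rcases subsingleton_or_nontrivial (Matrix N N ℂ) with hN | hN
  · simp
  · exact spectrum.spectralRadius_lt_of_forall_lt _ (r := 1) fun μ hμ => hM μ hμ

theorem StableR.exists_isBigO_pow {M : Matrix N N ℝ} (hM : StableR M) :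
    ∃ ρ : ℝ≥0, ρ < 1 ∧ (fun t : ℕ => M ^ t) =O[atTop] fun t => (ρ : ℝ) ^ t := by
  obtain ⟨ρ, hMρ, hρ⟩ := ENNReal.lt_iff_exists_nnreal_btwn.mp hM.spectralRadius_lt_one
  refine ⟨ρ, by exact_mod_cast hρ, ?_⟩
  have norm_pow_map (t : ℕ) : ‖M.map Complex.ofReal ^ t‖ = ‖M ^ t‖ := by
    rw [← Matrix.frobenius_norm_map_eq (M ^ t) Complex.ofReal Complex.norm_real]
    exact congrArg norm (map_pow Complex.ofRealHom.mapMatrix M t).symm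
  exact ((isBigO_pow_of_spectralRadius_lt hMρ).norm_left.congr_left norm_pow_map).of_norm_left

theorem StableR.summable_conj_pow {M : Matrix N N ℝ} (hM : StableR M) (W : Matrix N N ℝ) :
    Summable fun t : ℕ => (M ^ t)ᵀ * W * M ^ t := by
  obtain ⟨ρ, hρ, hpow⟩ := hM.exists_isBigO_pow
  have hpowT : (fun t : ℕ => (M ^ t)ᵀ) =O[atTop] fun t => (ρ : ℝ) ^ t :=
    (hpow.norm_left.congr_left fun t => (Matrix.frobenius_norm_transpose _).symm).of_norm_left
  have hconj : (fun t : ℕ => (M ^ t)ᵀ * W * M ^ t) =O[atTop] fun t => ((ρ : ℝ) * ρ) ^ t := by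
    simpa only [mul_pow, mul_one] using
      (hpowT.mul (Asymptotics.isBigO_const_const W one_ne_zero atTop)).mul hpow
  have hρρ : (ρ : ℝ) * ρ < 1 := by
    exact_mod_cast mul_lt_one_of_nonneg_of_lt_one_left zero_le hρ hρ.le
  exact summable_of_isBigO_nat (summable_geometric_of_lt_one (by positivity) hρρ) hconj

end Stability

section LoewnerOrder

variable {N M : Type*}

theorem posSemidef_transpose_mul_mul [Finite N] [Fintype M] (C : Matrix M N ℝ) {P : Matrix M M ℝ}
    (hP : P.PosSemidef) : (Cᵀ * P * C).PosSemidef := by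
  simpa only [Matrix.conjTranspose_eq_transpose_of_trivial] using hP.conjTranspose_mul_mul_same C

theorem transpose_mul_mul_mono [Finite N] [Fintype M] (C : Matrix M N ℝ) :
    Monotone fun P : Matrix M M ℝ => Cᵀ * P * C := by
  intro P P' h
  rw [Matrix.le_iff] at h ⊢
  simpa only [Matrix.mul_sub, Matrix.sub_mul] using posSemidef_transpose_mul_mul C h

theorem dotProduct_mulVec_mono [Fintype N] (x : N → ℝ) :
    Monotone fun P : Matrix N N ℝ => x ⬝ᵥ P *ᵥ x := by
  intro P P' h
  have := Matrix.PosSemidef.dotProduct_mulVec_nonneg (Matrix.le_iff.mp h) x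
  simpa only [star_trivial, Matrix.sub_mulVec, dotProduct_sub, sub_nonneg] using this

theorem isClosed_setOf_posSemidef [Finite N] : IsClosed {P : Matrix N N ℝ | P.PosSemidef} := by
  have := Fintype.ofFinite N
  simp only [Matrix.posSemidef_iff_dotProduct_mulVec, Set.ofPred_and, Set.ofPred_forall]
  refine IsClosed.inter (isClosed_eq (by fun_prop) continuous_id) (isClosed_iInter fun x => ?_)
  exact isClosed_le continuous_const (by fun_prop)

theorem apply_eq_polarization [Fintype N] [DecidableEq N] {P : Matrix N N ℝ} (hP : P.IsSymm)
    (i j : N) :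
    P i j = ((Pi.single i 1 + Pi.single j 1) ⬝ᵥ P *ᵥ (Pi.single i 1 + Pi.single j 1)
      - Pi.single i 1 ⬝ᵥ P *ᵥ Pi.single i 1 - Pi.single j 1 ⬝ᵥ P *ᵥ Pi.single j 1) / 2 := by
  have hji : P j i = P i j := hP.apply i j
  simp only [Matrix.mulVec_add, add_dotProduct, dotProduct_add, Matrix.mulVec_single_one,
    single_one_dotProduct, Matrix.col_apply, hji]
  ring

theorem exists_tendsto_of_monotone_of_le [Finite N] {p : ℕ → Matrix N N ℝ} {X : Matrix N N ℝ}
    (hp : ∀ k, (p k).IsSymm) (hmono : Monotone p) (hX : ∀ k, p k ≤ X) :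
    ∃ P, Tendsto p atTop (𝓝 P) := by
  classical
  have := Fintype.ofFinite N
  have hform (x : N → ℝ) : ∃ l, Tendsto (fun k => x ⬝ᵥ p k *ᵥ x) atTop (𝓝 l) :=
    ⟨_, tendsto_atTop_ciSup ((dotProduct_mulVec_mono x).comp hmono)
      ⟨x ⬝ᵥ X *ᵥ x, Set.forall_mem_range.mpr fun k => dotProduct_mulVec_mono x (hX k)⟩⟩
  choose l hl using hform
  refine ⟨fun i j => (l (Pi.single i 1 + Pi.single j 1) - l (Pi.single i 1)
    - l (Pi.single j 1)) / 2, tendsto_pi_nhds.mpr fun i => tendsto_pi_nhds.mpr fun j => ?_⟩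
  simp only [fun k => apply_eq_polarization (hp k) i j]
  exact (((hl _).sub (hl _)).sub (hl _)).div_const 2

end LoewnerOrder

section Stein

variable {N : Type*} [Fintype N] [DecidableEq N] {F P P' W : Matrix N N ℝ}

theorem conj_pow_le_of_conj_le {D : Matrix N N ℝ} (hD : Fᵀ * D * F ≤ D) (t : ℕ) :
    (F ^ t)ᵀ * D * F ^ t ≤ D := by
  induction t with
  | zero => simp
  | succ t ih =>
    calc (F ^ (t + 1))ᵀ * D * F ^ (t + 1) = Fᵀ * ((F ^ t)ᵀ * D * F ^ t) * F := by
          simp only [pow_succ, Matrix.transpose_mul, Matrix.mul_assoc]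
      _ ≤ Fᵀ * D * F := transpose_mul_mul_mono F ih
      _ ≤ D := hD

theorem StableR.posSemidef_of_conj_le (hF : StableR F) {D : Matrix N N ℝ} (hD : Fᵀ * D * F ≤ D) :
    D.PosSemidef := by
  have hlim : Tendsto (fun t : ℕ => D - (F ^ t)ᵀ * D * F ^ t) atTop (𝓝 (D - 0)) :=
    tendsto_const_nhds.sub (hF.summable_conj_pow D).tendsto_atTop_zero
  rw [sub_zero] at hlim
  exact isClosed_setOf_posSemidef.mem_of_tendsto hlim
    (.of_forall fun t => Matrix.le_iff.mp (conj_pow_le_of_conj_le hD t))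

theorem StableR.le_of_subsolution_of_supersolution (hF : StableR F)
    (hP : P ≤ Fᵀ * P * F + W) (hP' : Fᵀ * P' * F + W ≤ P') : P ≤ P' := by
  refine Matrix.le_iff.mpr (hF.posSemidef_of_conj_le ?_)
  calc Fᵀ * (P' - P) * F = (Fᵀ * P' * F + W) - (Fᵀ * P * F + W) := by
        rw [Matrix.mul_sub, Matrix.sub_mul, add_sub_add_right_eq_sub]
    _ ≤ P' - P := sub_le_sub hP' hP

/-- The series `∑ (Fᵀ)ᵗ W Fᵗ`, which for stable `F` is the solution of the Stein equation
`X = Fᵀ X F + W` (for unstable `F` it may be the junk value `0`). -/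
noncomputable def steinSum (F W : Matrix N N ℝ) : Matrix N N ℝ :=
  ∑' t : ℕ, (F ^ t)ᵀ * W * F ^ t

theorem StableR.steinSum_eq (hF : StableR F) (W : Matrix N N ℝ) :
    Fᵀ * steinSum F W * F + W = steinSum F W := by
  have hsum := hF.summable_conj_pow W
  have hshift (t : ℕ) : (F ^ (t + 1))ᵀ * W * F ^ (t + 1) = Fᵀ * ((F ^ t)ᵀ * W * F ^ t) * F := by
    simp only [pow_succ, Matrix.transpose_mul, Matrix.mul_assoc]
  calc Fᵀ * steinSum F W * F + W = W + ∑' t : ℕ, (F ^ (t + 1))ᵀ * W * F ^ (t + 1) := by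
        simp only [hshift]
        rw [(hsum.mul_left _).tsum_mul_right, hsum.tsum_mul_left, add_comm, steinSum]
    _ = steinSum F W := by
        rw [steinSum, hsum.tsum_eq_zero_add, pow_zero, Matrix.transpose_one, Matrix.one_mul,
          Matrix.mul_one]

theorem StableR.eq_steinSum (hF : StableR F) (hP : Fᵀ * P * F + W = P) : P = steinSum F W :=
  le_antisymm (hF.le_of_subsolution_of_supersolution hP.ge (hF.steinSum_eq W).le)
    (hF.le_of_subsolution_of_supersolution (hF.steinSum_eq W).ge hP.le)

theorem StableR.posSemidef_steinSum (hF : StableR F) (hW : W.PosSemidef) :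
    (steinSum F W).PosSemidef := by
  rw [← Matrix.nonneg_iff_posSemidef] at hW ⊢
  exact hF.le_of_subsolution_of_supersolution (by simpa using hW) (hF.steinSum_eq W).le

theorem StableR.dotProduct_steinSum_mulVec (hF : StableR F) (W : Matrix N N ℝ) (x : N → ℝ) :
    x ⬝ᵥ steinSum F W *ᵥ x = ∑' t : ℕ, (F ^ t *ᵥ x) ⬝ᵥ W *ᵥ (F ^ t *ᵥ x) := by
  have hform : Continuous fun P : Matrix N N ℝ => x ⬝ᵥ P *ᵥ x := by fun_prop
  let form : Matrix N N ℝ →+ ℝ :=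
    { toFun := fun P => x ⬝ᵥ P *ᵥ x
      map_zero' := by simp
      map_add' := fun P P' => by rw [Matrix.add_mulVec, dotProduct_add] }
  calc x ⬝ᵥ steinSum F W *ᵥ x = ∑' t : ℕ, x ⬝ᵥ ((F ^ t)ᵀ * W * F ^ t) *ᵥ x :=
        (hF.summable_conj_pow W).map_tsum form hform
    _ = ∑' t : ℕ, (F ^ t *ᵥ x) ⬝ᵥ W *ᵥ (F ^ t *ᵥ x) := by
        simp only [← Matrix.mulVec_mulVec, Matrix.dotProduct_mulVec x, Matrix.vecMul_transpose]

end Stein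

section Complexification

open scoped ComplexOrder

theorem star_dotProduct_conj_mulVec {N M 𝕜 : Type*} [Fintype N] [Fintype M] [CommSemiring 𝕜]
    [StarRing 𝕜] (C : Matrix M N 𝕜) (P : Matrix M M 𝕜) (v : N → 𝕜) :
    star v ⬝ᵥ (Cᴴ * P * C) *ᵥ v = star (C *ᵥ v) ⬝ᵥ P *ᵥ (C *ᵥ v) := by
  rw [Matrix.star_mulVec, ← Matrix.dotProduct_mulVec, Matrix.mulVec_mulVec, Matrix.mulVec_mulVec,
    Matrix.mul_assoc]

theorem mulVec_eq_zero_of_add_conj_mulVec_eq_zero {N M 𝕜 : Type*} [Fintype N] [Fintype M]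
    [RCLike 𝕜] {Q : Matrix N N 𝕜} {R : Matrix M M 𝕜} {K : Matrix M N 𝕜} {v : N → 𝕜}
    (hQ : Q.PosSemidef) (hR : R.PosDef) (hv : (Q + Kᴴ * R * K) *ᵥ v = 0) :
    Q *ᵥ v = 0 ∧ K *ᵥ v = 0 := by
  have hsum : star v ⬝ᵥ Q *ᵥ v + star (K *ᵥ v) ⬝ᵥ R *ᵥ (K *ᵥ v) = 0 := by
    rw [← star_dotProduct_conj_mulVec, ← dotProduct_add, ← Matrix.add_mulVec, hv, dotProduct_zero]
  obtain ⟨hQv, hRv⟩ := (add_eq_zero_iff_of_nonneg (hQ.dotProduct_mulVec_nonneg v)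
    (hR.posSemidef.dotProduct_mulVec_nonneg _)).mp hsum
  refine ⟨(hQ.dotProduct_mulVec_zero_iff v).mp hQv, ?_⟩
  by_contra hKv
  exact (hR.dotProduct_mulVec_pos hKv).ne' hRv

theorem map_ofReal_conj {N M : Type*} [Fintype M] (C : Matrix M N ℝ) (P : Matrix M M ℝ) :
    (Cᵀ * P * C).map Complex.ofReal =
      (C.map Complex.ofReal)ᴴ * P.map Complex.ofReal * C.map Complex.ofReal := by
  ext i j
  simp [Matrix.mul_apply]

theorem map_ofReal_sub_mul_mulVec {N M : Type*} [Fintype N] [Fintype M] (A : Matrix N N ℝ)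
    (B : Matrix N M ℝ) {K : Matrix M N ℝ} {v : N → ℂ} (hKv : K.map Complex.ofReal *ᵥ v = 0) :
    (A - B * K).map Complex.ofReal *ᵥ v = A.map Complex.ofReal *ᵥ v := by
  have hBK : (B * K).map Complex.ofReal = B.map Complex.ofReal * K.map Complex.ofReal :=
    Matrix.map_mul (f := Complex.ofRealHom)
  rw [Matrix.map_sub _ Complex.ofReal_sub, hBK, Matrix.sub_mulVec, ← Matrix.mulVec_mulVec, hKv,
    Matrix.mulVec_zero, sub_zero]

variable {N : Type*}

theorem posSemidef_map_ofReal [Finite N] {P : Matrix N N ℝ} (hP : P.PosSemidef) :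
    (P.map Complex.ofReal).PosSemidef := by
  classical
  have := Fintype.ofFinite N
  obtain ⟨C, rfl⟩ := CStarAlgebra.nonneg_iff_eq_star_mul_self.mp hP.nonneg
  have hC := map_ofReal_conj C 1
  rw [Matrix.map_one _ rfl rfl, Matrix.mul_one, Matrix.mul_one] at hC
  exact hC ▸ Matrix.posSemidef_conjTranspose_mul_self (C.map Complex.ofReal)

theorem posDef_map_ofReal [Finite N] {P : Matrix N N ℝ} (hP : P.PosDef) :
    (P.map Complex.ofReal).PosDef := by
  classical
  have := Fintype.ofFinite N
  exact (posSemidef_map_ofReal hP.posSemidef).posDef_iff_isUnit.mpr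
    (hP.isUnit.map Complex.ofRealHom.mapMatrix)

-- An eigenvector `v` of `F` with eigenvalue `μ` satisfies `v* P v = |μ|² v* P v + v* W v`, which
-- forces `v* W v = 0` as soon as `1 ≤ |μ|`.
theorem stableR_of_conj_add_eq [Fintype N] [DecidableEq N] {F P W : Matrix N N ℝ}
    (hP : P.PosSemidef) (hW : W.PosSemidef) (hPW : Fᵀ * P * F + W = P)
    (hker : ∀ (μ : ℂ) (v : N → ℂ), v ≠ 0 → F.map Complex.ofReal *ᵥ v = μ • v →
      W.map Complex.ofReal *ᵥ v = 0 → ‖μ‖ < 1) :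
    StableR F := by
  intro μ hμ
  obtain ⟨v, hv, hFv⟩ := mem_spectrum_iff_exists_mulVec_eq_smul.mp hμ
  have hWc := posSemidef_map_ofReal hW
  have hPv := (posSemidef_map_ofReal hP).dotProduct_mulVec_nonneg v
  have hWv := hWc.dotProduct_mulVec_nonneg v
  have energy : (‖μ‖ ^ 2 : ℂ) * (star v ⬝ᵥ P.map Complex.ofReal *ᵥ v)
      + star v ⬝ᵥ W.map Complex.ofReal *ᵥ v = star v ⬝ᵥ P.map Complex.ofReal *ᵥ v := by
    conv_rhs => rw [← hPW, Matrix.map_add _ Complex.ofReal_add, map_ofReal_conj, Matrix.add_mulVec,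
      dotProduct_add, star_dotProduct_conj_mulVec, hFv, Matrix.mulVec_smul, star_smul,
      smul_dotProduct, dotProduct_smul, smul_smul, smul_eq_mul, Complex.star_def, Complex.conj_mul']
  by_contra! hμ1
  refine hμ1.not_gt (hker μ v hv hFv ((hWc.dotProduct_mulVec_zero_iff v).mp ?_))
  have hgrow : star v ⬝ᵥ P.map Complex.ofReal *ᵥ v
      ≤ (‖μ‖ ^ 2 : ℂ) * (star v ⬝ᵥ P.map Complex.ofReal *ᵥ v) :=
    le_mul_of_one_le_left hPv (by exact_mod_cast one_le_pow₀ hμ1)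
  exact le_antisymm (eq_sub_of_add_eq' energy ▸ sub_nonpos.mpr hgrow) hWv

end Complexification

section RiccatiAlgebra

variable {N M 𝕜 : Type*} [Fintype N] [Fintype M] [CommRing 𝕜]
  (A : Matrix N N 𝕜) (B : Matrix N M 𝕜) (Q : Matrix N N 𝕜) (R : Matrix M M 𝕜)

/-- The weight `R + Bᵀ P B` of the input when the next state is penalized by `P`. -/
def inputWeight (P : Matrix N N 𝕜) : Matrix M M 𝕜 := R + Bᵀ * P * B

/-- The feedback gain `(R + Bᵀ P B)⁻¹ Bᵀ P A` attached to `P`. -/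
noncomputable def lqrGain [DecidableEq M] (P : Matrix N N 𝕜) : Matrix M N 𝕜 :=
  (inputWeight B R P)⁻¹ * (Bᵀ * (P * A))

/-- The right-hand side `Aᵀ P A - Aᵀ P B (R + Bᵀ P B)⁻¹ Bᵀ P A + Q` of the algebraic Riccati
equation, whose solutions are the fixed points of this map. -/
noncomputable def riccatiMap [DecidableEq M] (P : Matrix N N 𝕜) : Matrix N N 𝕜 :=
  Aᵀ * (P * A) - Aᵀ * (P * (B * lqrGain A B R P)) + Q

/-- The weight `Q + Kᵀ R K` of the state in the running cost under the feedback `u = -K x`. -/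
def stageWeight (K : Matrix M N 𝕜) : Matrix N N 𝕜 := Q + Kᵀ * R * K

/-- One step of policy evaluation for the gain `K`: the weight of the current state when `K` is
used once and the next state is penalized by `P`. -/
def policyMap (K : Matrix M N 𝕜) (P : Matrix N N 𝕜) : Matrix N N 𝕜 :=
  (A - B * K)ᵀ * P * (A - B * K) + stageWeight Q R K

variable {B R} in
theorem policyMap_eq_riccatiMap_add [DecidableEq M] {P : Matrix N N 𝕜} (hP : P.IsSymm)
    (hR : R.IsSymm) (hS : IsUnit (inputWeight B R P)) (K : Matrix M N 𝕜) :
    policyMap A B Q R K P = riccatiMap A B Q R P +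
      (K - lqrGain A B R P)ᵀ * inputWeight B R P * (K - lqrGain A B R P) := by
  have hSsymm : (inputWeight B R P)ᵀ = inputWeight B R P := by
    simp only [inputWeight, Matrix.transpose_add, Matrix.transpose_mul, Matrix.transpose_transpose,
      hP.eq, hR.eq, Matrix.mul_assoc]
  have hSG : inputWeight B R P * lqrGain A B R P = Bᵀ * (P * A) :=
    Matrix.mul_nonsing_inv_cancel_left _ _ ((Matrix.isUnit_iff_isUnit_det _).mp hS)
  have hGS : (lqrGain A B R P)ᵀ * inputWeight B R P = Aᵀ * (P * B) := by
    rw [← hSsymm, ← Matrix.transpose_mul, hSG]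
    simp only [Matrix.transpose_mul, Matrix.transpose_transpose, hP.eq, Matrix.mul_assoc]
  have hsquare : (K - lqrGain A B R P)ᵀ * inputWeight B R P * (K - lqrGain A B R P)
      = Kᵀ * inputWeight B R P * K - Kᵀ * (Bᵀ * (P * A)) - Aᵀ * (P * B) * K
        + Aᵀ * (P * B) * lqrGain A B R P := by
    rw [Matrix.transpose_sub, Matrix.sub_mul, hGS, Matrix.mul_sub, Matrix.sub_mul, Matrix.sub_mul,
      Matrix.mul_assoc Kᵀ _ (lqrGain A B R P), hSG]
    abel
  rw [hsquare]
  simp only [policyMap, riccatiMap, stageWeight, inputWeight, Matrix.transpose_sub,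
    Matrix.transpose_mul, Matrix.mul_sub, Matrix.sub_mul, Matrix.mul_add, Matrix.add_mul,
    Matrix.mul_assoc]
  abel

theorem riccatiMap_submatrix {N' M' : Type*} [Fintype N'] [Fintype M'] [DecidableEq M]
    [DecidableEq M'] (e : N' ≃ N) (f : M' ≃ M) (P : Matrix N N 𝕜) :
    (riccatiMap A B Q R P).submatrix e e = riccatiMap (A.submatrix e e) (B.submatrix e f)
      (Q.submatrix e e) (R.submatrix f f) (P.submatrix e e) := by
  simp only [riccatiMap, lqrGain, inputWeight, Matrix.transpose_submatrix,
    Matrix.submatrix_mul_equiv, ← Matrix.submatrix_add, ← Matrix.submatrix_sub, ← Pi.add_apply,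
    ← Pi.sub_apply, Matrix.inv_submatrix_equiv]

end RiccatiAlgebra

section Riccati

theorem posDef_inputWeight {N M : Type*} [Fintype N] [Finite M] (B : Matrix N M ℝ)
    {R : Matrix M M ℝ} {P : Matrix N N ℝ} (hR : R.PosDef) (hP : P.PosSemidef) :
    (inputWeight B R P).PosDef :=
  hR.add_posSemidef (posSemidef_transpose_mul_mul B hP)

theorem posSemidef_stageWeight {N M : Type*} [Finite N] [Fintype M] {Q : Matrix N N ℝ}
    {R : Matrix M M ℝ} (hQ : Q.PosSemidef) (hR : R.PosSemidef) (K : Matrix M N ℝ) :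
    (stageWeight Q R K).PosSemidef :=
  hQ.add (posSemidef_transpose_mul_mul K hR)

variable {N M : Type*} [Fintype N] [Fintype M] {A : Matrix N N ℝ} {B : Matrix N M ℝ}
  {Q : Matrix N N ℝ} {R : Matrix M M ℝ} {P P' : Matrix N N ℝ}

theorem policyMap_mono (A : Matrix N N ℝ) (B : Matrix N M ℝ) (Q : Matrix N N ℝ) (R : Matrix M M ℝ)
    (K : Matrix M N ℝ) : Monotone (policyMap A B Q R K) := fun _ _ h =>
  add_le_add_left (transpose_mul_mul_mono (A - B * K) h) _

section

variable [DecidableEq M] (A B Q)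

theorem policyMap_eq_riccatiMap_add_of_posDef (hR : R.PosDef) (hP : P.PosSemidef)
    (K : Matrix M N ℝ) :
    policyMap A B Q R K P = riccatiMap A B Q R P +
      (K - lqrGain A B R P)ᵀ * inputWeight B R P * (K - lqrGain A B R P) :=
  policyMap_eq_riccatiMap_add A Q (Matrix.isHermitian_iff_isSymm.mp hP.isHermitian)
    (Matrix.isHermitian_iff_isSymm.mp hR.isHermitian) (posDef_inputWeight B hR hP).isUnit K

theorem policyMap_lqrGain (hR : R.PosDef) (hP : P.PosSemidef) :
    policyMap A B Q R (lqrGain A B R P) P = riccatiMap A B Q R P := by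
  simp [policyMap_eq_riccatiMap_add_of_posDef A B Q hR hP]

theorem riccatiMap_le_policyMap (hR : R.PosDef) (hP : P.PosSemidef) (K : Matrix M N ℝ) :
    riccatiMap A B Q R P ≤ policyMap A B Q R K P := by
  rw [policyMap_eq_riccatiMap_add_of_posDef A B Q hR hP]
  exact le_add_of_nonneg_right
    (posSemidef_transpose_mul_mul _ (posDef_inputWeight B hR hP).posSemidef).nonneg

theorem riccatiMap_le_riccatiMap (hR : R.PosDef) (hP : P.PosSemidef) (h : P ≤ P') :
    riccatiMap A B Q R P ≤ riccatiMap A B Q R P' := by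
  have hP' : P'.PosSemidef := (hP.nonneg.trans h).posSemidef
  calc riccatiMap A B Q R P ≤ policyMap A B Q R (lqrGain A B R P') P :=
        riccatiMap_le_policyMap A B Q hR hP _
    _ ≤ policyMap A B Q R (lqrGain A B R P') P' := policyMap_mono A B Q R _ h
    _ = riccatiMap A B Q R P' := policyMap_lqrGain A B Q hR hP'

variable {Q} in
theorem posSemidef_riccatiMap (hQ : Q.PosSemidef) (hR : R.PosDef) (hP : P.PosSemidef) :
    (riccatiMap A B Q R P).PosSemidef := by
  rw [← policyMap_lqrGain A B Q hR hP]
  exact (posSemidef_transpose_mul_mul _ hP).add (posSemidef_stageWeight hQ hR.posSemidef _)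

theorem continuousAt_riccatiMap (hR : R.PosDef) (hP : P.PosSemidef) :
    ContinuousAt (riccatiMap A B Q R) P := by
  have hS : Continuous (inputWeight B R) := by unfold inputWeight; fun_prop
  have hdet : ContinuousAt Ring.inverse (inputWeight B R P).det := by
    rw [Ring.inverse_eq_inv']
    exact continuousAt_inv₀ (posDef_inputWeight B hR hP).det_pos.ne'
  have hinv : ContinuousAt (fun P => (inputWeight B R P)⁻¹) P :=
    (continuousAt_matrix_inv _ hdet).comp hS.continuousAt
  unfold riccatiMap lqrGain
  fun_prop

end

section FixedPoint

variable [DecidableEq M]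

theorem exists_riccatiMap_eq_of_le {X : Matrix N N ℝ} (hQ : Q.PosSemidef) (hR : R.PosDef)
    (hX : X.PosSemidef) (hle : riccatiMap A B Q R X ≤ X) :
    ∃ P : Matrix N N ℝ, P.PosSemidef ∧ riccatiMap A B Q R P = P := by
  set p : ℕ → Matrix N N ℝ := fun k => (riccatiMap A B Q R)^[k] 0
  have p_succ (k : ℕ) : p (k + 1) = riccatiMap A B Q R (p k) := Function.iterate_succ_apply' _ _ _
  have hp (k : ℕ) : (p k).PosSemidef := by
    induction k with
    | zero => exact .zero
    | succ k ih => exact p_succ k ▸ posSemidef_riccatiMap A B hQ hR ih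
  have hmono : Monotone p := monotone_nat_of_le_succ fun k => by
    induction k with
    | zero => exact (hp 1).nonneg
    | succ k ih =>
      rw [p_succ k, p_succ (k + 1)]
      exact riccatiMap_le_riccatiMap A B Q hR (hp k) ih
  have hpX (k : ℕ) : p k ≤ X := by
    induction k with
    | zero => exact hX.nonneg
    | succ k ih => exact p_succ k ▸ (riccatiMap_le_riccatiMap A B Q hR (hp k) ih).trans hle
  obtain ⟨P, hlim⟩ := exists_tendsto_of_monotone_of_le
    (fun k => Matrix.isHermitian_iff_isSymm.mp (hp k).isHermitian) hmono hpX
  have hP : P.PosSemidef := isClosed_setOf_posSemidef.mem_of_tendsto hlim (.of_forall hp)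
  exact ⟨P, hP, isFixedPt_of_tendsto_iterate hlim (continuousAt_riccatiMap A B Q hR hP)⟩

variable [DecidableEq N]

theorem exists_riccatiMap_eq (hQ : Q.PosSemidef) (hR : R.PosDef)
    (hAB : ∃ K : Matrix M N ℝ, StableR (A - B * K)) :
    ∃ P : Matrix N N ℝ, P.PosSemidef ∧ riccatiMap A B Q R P = P := by
  obtain ⟨K, hK⟩ := hAB
  have hX := hK.posSemidef_steinSum (posSemidef_stageWeight hQ hR.posSemidef K)
  exact exists_riccatiMap_eq_of_le hQ hR hX <|
    (riccatiMap_le_policyMap A B Q hR hX K).trans (hK.steinSum_eq _).le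

theorem stableR_sub_mul_lqrGain (hQ : Q.PosSemidef) (hR : R.PosDef)
    (hQA : ∃ L : Matrix N N ℝ, StableR (Aᵀ - Qᵀ * L)) (hP : P.PosSemidef)
    (hfix : riccatiMap A B Q R P = P) : StableR (A - B * lqrGain A B R P) := by
  obtain ⟨L, hL⟩ := hQA
  have hobs : StableR (A - Lᵀ * Q) := by
    simpa [← stableR_transpose (M := A - Lᵀ * Q)] using hL
  refine stableR_of_conj_add_eq hP (posSemidef_stageWeight hQ hR.posSemidef (lqrGain A B R P))
    ((policyMap_lqrGain A B Q hR hP).trans hfix) fun μ v hv hμv hWv => ?_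
  rw [stageWeight, Matrix.map_add _ Complex.ofReal_add, map_ofReal_conj] at hWv
  obtain ⟨hQv, hKv⟩ := mulVec_eq_zero_of_add_conj_mulVec_eq_zero
    (posSemidef_map_ofReal hQ) (posDef_map_ofReal hR) hWv
  refine hobs μ (mem_spectrum_iff_exists_mulVec_eq_smul.mpr ⟨v, hv, ?_⟩)
  rw [map_ofReal_sub_mul_mulVec A Lᵀ hQv, ← map_ofReal_sub_mul_mulVec A B hKv, hμv]

theorem le_of_riccatiMap_eq_of_policyMap_eq (hR : R.PosDef) (hP : P.PosSemidef)
    (hfix : riccatiMap A B Q R P = P) {K : Matrix M N ℝ} (hK : StableR (A - B * K))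
    (hP' : policyMap A B Q R K P' = P') : P ≤ P' :=
  hK.le_of_subsolution_of_supersolution
    (hfix.ge.trans (riccatiMap_le_policyMap A B Q hR hP K)) hP'.le

theorem riccatiMap_fixedPoint_unique (hQ : Q.PosSemidef) (hR : R.PosDef)
    (hQA : ∃ L : Matrix N N ℝ, StableR (Aᵀ - Qᵀ * L))
    (hP : P.PosSemidef) (hfix : riccatiMap A B Q R P = P)
    (hP' : P'.PosSemidef) (hfix' : riccatiMap A B Q R P' = P') : P = P' :=
  le_antisymm
    (le_of_riccatiMap_eq_of_policyMap_eq hR hP hfix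
      (stableR_sub_mul_lqrGain hQ hR hQA hP' hfix') ((policyMap_lqrGain A B Q hR hP').trans hfix'))
    (le_of_riccatiMap_eq_of_policyMap_eq hR hP' hfix'
      (stableR_sub_mul_lqrGain hQ hR hQA hP hfix) ((policyMap_lqrGain A B Q hR hP).trans hfix))

end FixedPoint

section Cost

variable [DecidableEq N]

theorem lqCost_eq_dotProduct_steinSum (Q : Matrix N N ℝ) (R : Matrix M M ℝ) {K : Matrix M N ℝ}
    (hK : StableR (A - B * K)) (x : N → ℝ) :
    lqCost A B Q R K x = x ⬝ᵥ steinSum (A - B * K) (stageWeight Q R K) *ᵥ x := by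
  have hstage (y : N → ℝ) : y ⬝ᵥ stageWeight Q R K *ᵥ y
      = y ⬝ᵥ Q *ᵥ y + -(K *ᵥ y) ⬝ᵥ R *ᵥ -(K *ᵥ y) := by
    simp only [stageWeight, Matrix.add_mulVec, dotProduct_add, ← Matrix.mulVec_mulVec,
      Matrix.dotProduct_mulVec y Kᵀ, Matrix.vecMul_transpose, Matrix.mulVec_neg, neg_dotProduct_neg]
  simp only [hK.dotProduct_steinSum_mulVec, hstage, lqCost]

theorem lqCost_lqrGain_le [DecidableEq M] (hR : R.PosDef) (hP : P.PosSemidef)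
    (hfix : riccatiMap A B Q R P = P) (hstable : StableR (A - B * lqrGain A B R P))
    {K : Matrix M N ℝ} (hK : StableR (A - B * K)) (x : N → ℝ) :
    lqCost A B Q R (lqrGain A B R P) x ≤ lqCost A B Q R K x := by
  have hP_eq : P = steinSum (A - B * lqrGain A B R P) (stageWeight Q R (lqrGain A B R P)) :=
    hstable.eq_steinSum ((policyMap_lqrGain A B Q hR hP).trans hfix)
  rw [lqCost_eq_dotProduct_steinSum Q R hstable, lqCost_eq_dotProduct_steinSum Q R hK, ← hP_eq]
  exact dotProduct_mulVec_mono x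
    (le_of_riccatiMap_eq_of_policyMap_eq hR hP hfix hK (hK.steinSum_eq _))

end Cost

end Riccati

section BlockCirculant

variable {r : ℕ} {ι κ χ : Type*}

theorem psiBC_injective : Function.Injective (psiBC (r := r) (ι := ι) (κ := κ)) := by
  intro T S h
  ext k i j
  have := NeZero.of_pos k.pos
  simpa [psiBC] using congrFun₂ h (k, i) (0, j)

theorem psiBC_add (T S : Fin r → Matrix ι κ ℝ) : psiBC (T + S) = psiBC T + psiBC S := rfl

theorem psiBC_sub (T S : Fin r → Matrix ι κ ℝ) : psiBC (T - S) = psiBC T - psiBC S := rfl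

theorem psiBC_tTr (T : Fin r → Matrix ι κ ℝ) : psiBC (tTr T) = (psiBC T)ᵀ := by
  ext p q
  have := NeZero.of_pos p.1.pos
  simp [psiBC, tTr]

theorem psiBC_tProd [Fintype κ] (T : Fin r → Matrix ι κ ℝ) (S : Fin r → Matrix κ χ ℝ) :
    psiBC (tProd T S) = psiBC T * psiBC S := by
  ext p q
  have := NeZero.of_pos p.1.pos
  simp only [psiBC, tProd, Matrix.mul_apply, Matrix.sum_apply, Fintype.sum_prod_type]
  rw [← Equiv.sum_comp (Equiv.subRight q.1)]
  simp

/-- The cyclic shift by `s` of the block index; block circulant matrices are those invariant under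
all simultaneous shifts of rows and columns. -/
def blockShift (ι : Type*) (s : Fin r) : Fin r × ι ≃ Fin r × ι :=
  haveI := NeZero.of_pos s.pos
  (Equiv.addRight s).prodCongr (Equiv.refl ι)

theorem psiBC_submatrix_blockShift (T : Fin r → Matrix ι κ ℝ) (s : Fin r) :
    (psiBC T).submatrix (blockShift ι s) (blockShift κ s) = psiBC T := by
  ext p q
  have := NeZero.of_pos s.pos
  simp [psiBC, blockShift]

theorem exists_psiBC_eq_of_submatrix_blockShift {G : Matrix (Fin r × ι) (Fin r × κ) ℝ}
    (hG : ∀ s, G.submatrix (blockShift ι s) (blockShift κ s) = G) : ∃ T, psiBC T = G := by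
  rcases eq_zero_or_neZero r with rfl | _
  · exact ⟨0, by ext p; exact p.1.elim0⟩
  · refine ⟨fun k i j => G (k, i) (0, j), ?_⟩
    ext p q
    simpa [psiBC, blockShift] using (congrFun₂ (hG q.1) (p.1 - q.1, p.2) (0, q.2)).symm

theorem exists_psiBC_eq_inv [Fintype ι] [DecidableEq ι] (T : Fin r → Matrix ι ι ℝ) :
    ∃ W, psiBC W = (psiBC T)⁻¹ :=
  exists_psiBC_eq_of_submatrix_blockShift fun s => by
    rw [← Matrix.inv_submatrix_equiv, psiBC_submatrix_blockShift]

theorem exists_psiBC_eq_of_riccatiMap_eq [Fintype ι] [DecidableEq ι] [Fintype κ] [DecidableEq κ]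
    {A Q : Fin r → Matrix ι ι ℝ} {B : Fin r → Matrix ι κ ℝ} {R : Fin r → Matrix κ κ ℝ}
    (hQ : (psiBC Q).PosSemidef) (hR : (psiBC R).PosDef)
    (hQA : ∃ L, StableR ((psiBC A)ᵀ - (psiBC Q)ᵀ * L))
    {X : Matrix (Fin r × ι) (Fin r × ι) ℝ} (hX : X.PosSemidef)
    (hfix : riccatiMap (psiBC A) (psiBC B) (psiBC Q) (psiBC R) X = X) : ∃ P, psiBC P = X := by
  refine exists_psiBC_eq_of_submatrix_blockShift fun s => ?_
  refine riccatiMap_fixedPoint_unique hQ hR hQA (hX.submatrix _) ?_ hX hfix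
  simpa only [psiBC_submatrix_blockShift, hfix] using (riccatiMap_submatrix (psiBC A) (psiBC B)
    (psiBC Q) (psiBC R) (blockShift ι s) (blockShift κ s) X).symm

end BlockCirculant

section TensorRiccati

variable {n m r : ℕ} {A Q P : Fin r → Matrix (Fin n) (Fin n) ℝ}
  {B : Fin r → Matrix (Fin n) (Fin m) ℝ} {R : Fin r → Matrix (Fin m) (Fin m) ℝ}

theorem solvesTARE_iff : SolvesTARE A B Q R P ↔
    riccatiMap (psiBC A) (psiBC B) (psiBC Q) (psiBC R) (psiBC P) = psiBC P := by
  have psiBC_rhs {W : Fin r → Matrix (Fin m) (Fin m) ℝ}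
      (hW : psiBC W = (psiBC R + (psiBC B)ᵀ * psiBC P * psiBC B)⁻¹) :
      psiBC (tProd (tTr A) (tProd P A)
        - tProd (tTr A) (tProd P (tProd B (tProd W (tProd (tTr B) (tProd P A))))) + Q) =
      riccatiMap (psiBC A) (psiBC B) (psiBC Q) (psiBC R) (psiBC P) := by
    simp only [psiBC_add, psiBC_sub, psiBC_tProd, psiBC_tTr, hW, riccatiMap, lqrGain, inputWeight]
  constructor
  · rintro ⟨W, hW, hP⟩
    rw [← psiBC_rhs hW, ← hP]
  · intro hfix
    obtain ⟨W, hW⟩ := exists_psiBC_eq_inv (R + tProd (tProd (tTr B) P) B)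
    simp only [psiBC_add, psiBC_tProd, psiBC_tTr] at hW
    exact ⟨W, hW, psiBC_injective (by rw [psiBC_rhs hW, hfix])⟩

theorem IsTQRGain.psiBC_eq {K : Fin r → Matrix (Fin m) (Fin n) ℝ} (hK : IsTQRGain B R A P K) :
    psiBC K = lqrGain (psiBC A) (psiBC B) (psiBC R) (psiBC P) := by
  obtain ⟨W, hW, rfl⟩ := hK
  simp only [psiBC_tProd, psiBC_tTr, hW, lqrGain, inputWeight]

end TensorRiccati

theorem tqr_existence_and_optimality {n m r : ℕ}
    (A Q : Fin r → Matrix (Fin n) (Fin n) ℝ)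
    (B : Fin r → Matrix (Fin n) (Fin m) ℝ) (R : Fin r → Matrix (Fin m) (Fin m) ℝ)
    (hQsymm : tTr Q = Q) (hQ : (psiBC Q).PosSemidef)
    (hRsymm : tTr R = R) (hR : (psiBC R).PosDef)
    (hStab : ∃ K : Matrix (Fin r × Fin m) (Fin r × Fin n) ℝ,
      StableR (psiBC A - psiBC B * K))
    (hDet : ∃ L : Matrix (Fin r × Fin n) (Fin r × Fin n) ℝ,
      StableR ((psiBC A)ᵀ - (psiBC Q)ᵀ * L)) :
    (∃! P : Fin r → Matrix (Fin n) (Fin n) ℝ,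
        (psiBC P).PosSemidef ∧ SolvesTARE A B Q R P) ∧
    (∀ P : Fin r → Matrix (Fin n) (Fin n) ℝ,
      (psiBC P).PosSemidef → SolvesTARE A B Q R P →
      ∀ K : Fin r → Matrix (Fin m) (Fin n) ℝ, IsTQRGain B R A P K →
        StableR (psiBC A - psiBC B * psiBC K) ∧
        ∀ (x0 : Fin r × Fin n → ℝ) (K' : Fin r → Matrix (Fin m) (Fin n) ℝ),
          StableR (psiBC A - psiBC B * psiBC K') →
          lqCost (psiBC A) (psiBC B) (psiBC Q) (psiBC R) (psiBC K) x0 ≤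
            lqCost (psiBC A) (psiBC B) (psiBC Q) (psiBC R) (psiBC K') x0) := by
  constructor
  · obtain ⟨X, hX, hfix⟩ := exists_riccatiMap_eq hQ hR hStab
    obtain ⟨P, rfl⟩ := exists_psiBC_eq_of_riccatiMap_eq hQ hR hDet hX hfix
    refine ⟨P, ⟨hX, solvesTARE_iff.mpr hfix⟩, fun P' ⟨hP', hTARE'⟩ => psiBC_injective ?_⟩
    exact riccatiMap_fixedPoint_unique hQ hR hDet hP' (solvesTARE_iff.mp hTARE') hX hfix
  · intro P hP hTARE K hK
    have hfix := solvesTARE_iff.mp hTARE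
    have hstable := stableR_sub_mul_lqrGain hQ hR hDet hP hfix
    rw [hK.psiBC_eq]
    exact ⟨hstable, fun x0 K' hK' => lqCost_lqrGain_le hR hP hfix hstable hK' x0⟩
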